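/- arXiv:2111.11542 — 6 statements merged into one kernel-verified Lean document; each statement's English description precedes it below -/
import Mathlib

section
/- Let N < D, let X ∈ ℝ^{N×D} have full rank N, and let A be an invertible D×D matrix. Suppose β : [0,∞) → ℝ^D is a differentiable natural gradient flow trajectory for the data (X, y), i.e. F_X(β_t) β̇_t = −∇L_X(β_t) for all t ≥ 0, and β' : [0,∞) → ℝ^D is a differentiable natural gradient flow trajectory for the transformed data (XAᵀ, y), i.e. F_{XAᵀ}(β'_t) β̇'_t = −∇L_{XAᵀ}(β'_t) for all t ≥ 0. If the initial logits agree, X β_0 = X Aᵀ β'_0, then X β_t = X Aᵀ β'_t for all t ≥ 0. -/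
/-!
In logit coordinates natural gradient flow decouples and no longer depends on the data matrix.
When the rows of `Z` are linearly independent, `Zᵀ` can be cancelled from the flow equation for
the data `Z`, leaving one scalar
equation `φ(f)(1-φ(f)) f' = y(1-φ(y f))` per sample, where `f` is the logit of that sample
(`logit_equation`). For `y = ±1` this says that the margin `g = y f` satisfies
`g' = 1 + exp(-g)`, so `exp g + 1` solves `w' = w` and `exp g + 1 = (exp g₀ + 1) exp t`
(`exp_margin_eq`). The initial logits therefore determine all later ones. The theorem follows by
applying this to `X` and to `X Aᵀ`, which has the same rank as `X`.
-/

open Matrix Set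

/-- The logistic sigmoid `φ(u) = 1/(1+exp(-u))`. -/
noncomputable def phi (u : ℝ) : ℝ := 1 / (1 + Real.exp (-u))

/-- Gradient of the logistic loss `L_X(β) = Σ_n log(1+exp(-y_n x_nᵀβ))` of a linear
classifier `β`, namely `∇L_X(β) = -Σ_n y_n (1-φ(y_n x_nᵀβ)) x_n`. -/
noncomputable def gradL {N D : ℕ} (X : Matrix (Fin N) (Fin D) ℝ) (y : Fin N → ℝ)
    (β : Fin D → ℝ) : Fin D → ℝ :=
  fun d => -∑ n, y n * (1 - phi (y n * ∑ i, X n i * β i)) * X n d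

/-- Training-sample Fisher information matrix
`F_X(β) = Xᵀ diag(φ(x_nᵀβ)(1-φ(x_nᵀβ))) X`. -/
noncomputable def fisher {N D : ℕ} (X : Matrix (Fin N) (Fin D) ℝ) (β : Fin D → ℝ) :
    Matrix (Fin D) (Fin D) ℝ :=
  Xᵀ * Matrix.diagonal (fun n => phi ((X *ᵥ β) n) * (1 - phi ((X *ᵥ β) n))) * X

lemma vecMul_injective_of_rank {N D : ℕ} (Z : Matrix (Fin N) (Fin D) ℝ) (hZ : Z.rank = N) :
    Function.Injective Z.vecMul := by
  rw [Matrix.vecMul_injective_iff, linearIndependent_iff_card_eq_finrank_span, Set.finrank,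
    ← Matrix.rank_eq_finrank_span_row, hZ, Fintype.card_fin]

/-- Cancelling `Zᵀ` from the natural gradient flow equation gives a separate scalar equation for
each logit. -/
lemma logit_equation {N D : ℕ} (Z : Matrix (Fin N) (Fin D) ℝ) (hZ : Z.rank = N)
    (y : Fin N → ℝ) (b d : Fin D → ℝ) (h : fisher Z b *ᵥ d = -gradL Z y b) (n : Fin N) :
    phi ((Z *ᵥ b) n) * (1 - phi ((Z *ᵥ b) n)) * (Z *ᵥ d) n
      = y n * (1 - phi (y n * (Z *ᵥ b) n)) := by
  have key : (fun n => phi ((Z *ᵥ b) n) * (1 - phi ((Z *ᵥ b) n)) * (Z *ᵥ d) n)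
      = fun n => y n * (1 - phi (y n * (Z *ᵥ b) n)) := by
    apply vecMul_injective_of_rank Z hZ
    have h1 : fisher Z b *ᵥ d
        = (fun n => phi ((Z *ᵥ b) n) * (1 - phi ((Z *ᵥ b) n)) * (Z *ᵥ d) n) ᵥ* Z := by
      rw [fisher, ← Matrix.mulVec_mulVec, ← Matrix.mulVec_mulVec, Matrix.mulVec_transpose]
      congr 1
      funext k
      rw [Matrix.mulVec_diagonal]
    have h2 : -gradL Z y b = (fun n => y n * (1 - phi (y n * (Z *ᵥ b) n))) ᵥ* Z := by
      funext k
      simp [gradL, Matrix.vecMul, Matrix.mulVec, dotProduct]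
    exact h1.symm.trans (h.trans h2)
  exact congrFun key n

/-- Solving the scalar logit equation for the derivative of the margin `y * f`. -/
lemma margin_deriv {y f f' : ℝ} (hy : y = 1 ∨ y = -1)
    (h : phi f * (1 - phi f) * f' = y * (1 - phi (y * f))) :
    Real.exp (y * f) * (y * f') = Real.exp (y * f) + 1 := by
  have hp := Real.exp_pos f
  rcases hy with rfl | rfl
  · simp only [phi, one_mul, Real.exp_neg] at h ⊢
    field_simp at h
    ring_nf at h ⊢
    linarith
  · simp only [phi, neg_mul, one_mul, neg_neg, Real.exp_neg] at h ⊢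
    field_simp at h ⊢
    refine mul_left_cancel₀ (mul_pos hp (add_pos one_pos hp)).ne' ?_
    linear_combination -h

/-- Closed form of the margins along natural gradient flow with linearly independent samples. -/
lemma exp_margin_eq {N D : ℕ} (Z : Matrix (Fin N) (Fin D) ℝ) (hZ : Z.rank = N)
    (y : Fin N → ℝ) (hy : ∀ n, y n = 1 ∨ y n = -1) (β dβ : ℝ → Fin D → ℝ)
    (hdiff : ∀ t ∈ Ici (0:ℝ), HasDerivWithinAt β (dβ t) (Ici 0) t)
    (hflow : ∀ t ∈ Ici (0:ℝ), fisher Z (β t) *ᵥ dβ t = -gradL Z y (β t))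
    (n : Fin N) (t : ℝ) (ht : 0 ≤ t) :
    Real.exp (y n * (Z *ᵥ β t) n) + 1
      = (Real.exp (y n * (Z *ᵥ β 0) n) + 1) * Real.exp t := by
  have hf : ∀ s ∈ Ici (0:ℝ),
      HasDerivWithinAt (fun s => (Z *ᵥ β s) n) ((Z *ᵥ dβ s) n) (Ici 0) s := by
    intro s hs
    simp only [Matrix.mulVec, dotProduct]
    exact HasDerivWithinAt.fun_sum fun i _ =>
      ((hasDerivWithinAt_pi.1 (hdiff s hs)) i).const_mul (Z n i)
  have hw : ∀ s ∈ Ici (0:ℝ), HasDerivWithinAt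
      (fun s => (Real.exp (y n * (Z *ᵥ β s) n) + 1) * Real.exp (-s)) 0 (Ici 0) s := by
    intro s hs
    have h1 := (((hf s hs).const_mul (y n)).exp.add_const 1).mul
      (hasDerivAt_neg s).exp.hasDerivWithinAt
    refine h1.congr_deriv ?_
    rw [margin_deriv (hy n) (logit_equation Z hZ y _ _ (hflow s hs) n)]
    ring
  have hc := constant_of_has_deriv_right_zero (a := 0) (b := t)
    (fun s hs => ((hw s hs.1).continuousWithinAt).mono Icc_subset_Ici_self)
    (fun s hs => (hw s hs.1).mono (Ici_subset_Ici.2 hs.1)) t ⟨ht, le_rfl⟩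
  simp only [neg_zero, Real.exp_zero, mul_one, Real.exp_neg] at hc
  rw [← hc, mul_assoc, inv_mul_cancel₀ (Real.exp_pos t).ne', mul_one]

/-- **Theorem 1**: with `N < D` and `X` of full rank `N`, natural gradient flow on the
logistic loss has invariant logits under invertible transformations `A` of the data. -/
theorem ngf_logit_invariance_underparametrized {N D : ℕ} (hND : N < D)
    (X : Matrix (Fin N) (Fin D) ℝ) (hX : X.rank = N)
    (A : Matrix (Fin D) (Fin D) ℝ) (hA : IsUnit A)
    (y : Fin N → ℝ) (hy : ∀ n, y n = 1 ∨ y n = -1)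
    (β β' dβ dβ' : ℝ → Fin D → ℝ)
    (hβdiff : ∀ t ∈ Ici (0:ℝ), HasDerivWithinAt β (dβ t) (Ici 0) t)
    (hβ'diff : ∀ t ∈ Ici (0:ℝ), HasDerivWithinAt β' (dβ' t) (Ici 0) t)
    (hflow : ∀ t ∈ Ici (0:ℝ), fisher X (β t) *ᵥ dβ t = -gradL X y (β t))
    (hflow' : ∀ t ∈ Ici (0:ℝ),
      fisher (X * Aᵀ) (β' t) *ᵥ dβ' t = -gradL (X * Aᵀ) y (β' t))
    (hinit : X *ᵥ β 0 = (X * Aᵀ) *ᵥ β' 0) :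
    ∀ t ∈ Ici (0:ℝ), X *ᵥ β t = (X * Aᵀ) *ᵥ β' t := by
  intro t ht
  have hXA : (X * Aᵀ).rank = N := by
    rw [Matrix.rank_mul_eq_left_of_isUnit_det _ _
      (by rw [Matrix.det_transpose]; exact (Matrix.isUnit_iff_isUnit_det A).1 hA), hX]
  funext n
  have h1 := exp_margin_eq X hX y hy β dβ hβdiff hflow n t ht
  have h2 := exp_margin_eq (X * Aᵀ) hXA y hy β' dβ' hβ'diff hflow' n t ht
  rw [hinit, ← h2, add_left_inj, Real.exp_eq_exp] at h1
  have hy0 : y n ≠ 0 := by rcases hy n with h | h <;> simp [h]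
  exact mul_left_cancel₀ hy0 h1
end

section
/- Let N ≥ D, let X ∈ ℝ^{N×D} have full column rank D, and let A be an invertible D×D matrix. Suppose β : [0,∞) → ℝ^D is a differentiable natural gradient flow trajectory for (X, y), i.e. F_X(β_t) β̇_t = −∇L_X(β_t), and β' : [0,∞) → ℝ^D is a differentiable natural gradient flow trajectory for (XAᵀ, y), i.e. F_{XAᵀ}(β'_t) β̇'_t = −∇L_{XAᵀ}(β'_t). If Aᵀ β'_0 = β_0, then Aᵀ β'_t = β_t for all t ≥ 0. -/
/-!
Since every label is `±1`, the gradient of the logistic loss is `Xᵀ (φ(Xβ) - (1 + y)/2)`, and its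
Jacobian is exactly the Fisher matrix. Along a natural gradient flow the chain rule therefore gives
`d/dt ∇L(β_t) = F(β_t) β̇_t = -∇L(β_t)`, so `∇L(β_t) = exp(-t) ∇L(β_0)` (`gradL_flow`). No
uniqueness theorem for ordinary differential equations is needed.

The gradient transforms by `∇L_{XAᵀ}(b) = A ∇L_X(Aᵀ b)` (`gradL_mul_transpose`), so `Aᵀ β'_t` and
`β_t` have the same loss gradient at every time. The gradient map is injective when `X` has full
column rank, because `φ` is strictly increasing (`gradL_injective`); hence the two points agree.
-/

open Matrix Set

lemma hasDerivAt_phi (u : ℝ) : HasDerivAt phi (phi u * (1 - phi u)) u := by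
  have hpos : 1 + Real.exp (-u) ≠ 0 := by positivity
  have h : HasDerivAt (fun u : ℝ => 1 + Real.exp (-u)) (-Real.exp (-u)) u := by
    simpa using ((hasDerivAt_neg u).exp).const_add 1
  have h2 := h.inv hpos
  have e : phi = (fun u : ℝ => 1 + Real.exp (-u))⁻¹ := by
    funext v; simp [phi]
  rw [e]
  refine h2.congr_deriv ?_
  simp only [Pi.inv_apply]
  field_simp
  ring

lemma phi_strictMono : StrictMono phi := by
  intro a b hab
  have h : Real.exp (-b) < Real.exp (-a) := Real.exp_lt_exp.2 (by linarith)
  exact one_div_lt_one_div_of_lt (by positivity) (by linarith)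

lemma phi_neg (u : ℝ) : phi (-u) = 1 - phi u := by
  have h := Real.exp_pos u
  simp only [phi, neg_neg, Real.exp_neg]
  field_simp
  ring

/-- For labels `±1`, the loss gradient is `Xᵀ (φ(Xβ) - (1 + y)/2)`: the label enters only through
a constant shift. -/
lemma gradL_eq {N D : ℕ} (X : Matrix (Fin N) (Fin D) ℝ) (y : Fin N → ℝ)
    (hy : ∀ n, y n = 1 ∨ y n = -1) (b : Fin D → ℝ) :
    gradL X y b = Xᵀ *ᵥ (fun n => phi ((X *ᵥ b) n) - (1 + y n) / 2) := by
  funext d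
  simp only [gradL, mulVec, dotProduct, transpose_apply]
  rw [← Finset.sum_neg_distrib]
  refine Finset.sum_congr rfl fun n _ => ?_
  rcases hy n with h | h
  · rw [h, one_mul (∑ i, X n i * b i)]; ring
  · rw [h, neg_one_mul (∑ i, X n i * b i), phi_neg]; ring

lemma gradL_mul_transpose {N D : ℕ} (X : Matrix (Fin N) (Fin D) ℝ) (y : Fin N → ℝ)
    (hy : ∀ n, y n = 1 ∨ y n = -1) (A : Matrix (Fin D) (Fin D) ℝ) (b : Fin D → ℝ) :
    gradL (X * Aᵀ) y b = A *ᵥ gradL X y (Aᵀ *ᵥ b) := by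
  rw [gradL_eq _ y hy, gradL_eq _ y hy, mulVec_mulVec, mulVec_mulVec, transpose_mul,
    transpose_transpose]

/-- Pairing the difference of two gradients with `a - b` gives a sum of the nonnegative terms
`(φ(x_nᵀa) - φ(x_nᵀb)) (x_nᵀa - x_nᵀb)`, each of which vanishes only if `x_nᵀa = x_nᵀb`. -/
lemma gradL_injective {N D : ℕ} (X : Matrix (Fin N) (Fin D) ℝ) (hX : X.rank = D)
    (y : Fin N → ℝ) (hy : ∀ n, y n = 1 ∨ y n = -1) : Function.Injective (gradL X y) := by
  intro a b hab
  have hinj : Function.Injective X.mulVec := by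
    rw [mulVec_injective_iff, linearIndependent_iff_card_eq_finrank_span,
      Fintype.card_fin, Set.finrank, ← rank_eq_finrank_span_cols, hX]
  apply hinj
  rw [gradL_eq X y hy, gradL_eq X y hy, ← sub_eq_zero, ← mulVec_sub] at hab
  have h0 : ∑ n, (phi ((X *ᵥ a) n) - phi ((X *ᵥ b) n)) * ((X *ᵥ a) n - (X *ᵥ b) n) = 0 := by
    have h := congrArg (fun v => (a - b) ⬝ᵥ v) hab
    simp only [dotProduct_zero] at h
    rw [dotProduct_mulVec, vecMul_transpose, mulVec_sub] at h
    rw [← h]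
    simp only [dotProduct, Pi.sub_apply]
    exact Finset.sum_congr rfl fun n _ => by ring
  have hnn : ∀ u v : ℝ, 0 ≤ (phi u - phi v) * (u - v) := by
    intro u v
    rcases le_total u v with h | h
    · exact mul_nonneg_of_nonpos_of_nonpos
        (sub_nonpos.2 (phi_strictMono.monotone h)) (sub_nonpos.2 h)
    · exact mul_nonneg (sub_nonneg.2 (phi_strictMono.monotone h)) (sub_nonneg.2 h)
  funext n
  have hn := (Finset.sum_eq_zero_iff_of_nonneg fun n _ => hnn _ _).1 h0 n (Finset.mem_univ n)
  rcases mul_eq_zero.1 hn with h | h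
  · exact phi_strictMono.injective (sub_eq_zero.1 h)
  · exact sub_eq_zero.1 h

/-- Chain rule for the loss gradient along a curve; the Jacobian is the Fisher matrix. -/
lemma hasDerivWithinAt_gradL {N D : ℕ} (X : Matrix (Fin N) (Fin D) ℝ) (y : Fin N → ℝ)
    (hy : ∀ n, y n = 1 ∨ y n = -1) {β : ℝ → Fin D → ℝ} {v : Fin D → ℝ} {s : Set ℝ} {t : ℝ}
    (hβ : HasDerivWithinAt β v s t) :
    HasDerivWithinAt (fun t => gradL X y (β t)) (fisher X (β t) *ᵥ v) s t := by
  have hlin : ∀ n, HasDerivWithinAt (fun t => (X *ᵥ β t) n) ((X *ᵥ v) n) s t := by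
    intro n
    simp only [mulVec, dotProduct]
    exact HasDerivWithinAt.fun_sum fun i _ => ((hasDerivWithinAt_pi.1 hβ) i).const_mul (X n i)
  simp only [gradL_eq X y hy, fisher]
  rw [← mulVec_mulVec, ← mulVec_mulVec]
  refine hasDerivWithinAt_pi.2 fun d => ?_
  have hsum : HasDerivWithinAt
      (fun t => ∑ n, Xᵀ d n * (phi ((X *ᵥ β t) n) - (1 + y n) / 2))
      (∑ n, Xᵀ d n * (phi ((X *ᵥ β t) n) * (1 - phi ((X *ᵥ β t) n)) * (X *ᵥ v) n)) s t :=
    HasDerivWithinAt.fun_sum fun n _ =>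
      (((hasDerivAt_phi _).comp_hasDerivWithinAt t (hlin n)).sub_const _).const_mul _
  refine hsum.congr_deriv ?_
  exact Finset.sum_congr rfl fun n _ => by rw [mulVec_diagonal]

/-- Along a natural gradient flow the loss gradient decays exactly exponentially. -/
lemma gradL_flow {N D : ℕ} (X : Matrix (Fin N) (Fin D) ℝ) (y : Fin N → ℝ)
    (hy : ∀ n, y n = 1 ∨ y n = -1) (β dβ : ℝ → Fin D → ℝ)
    (hβ : ∀ t ∈ Ici (0:ℝ), HasDerivWithinAt β (dβ t) (Ici 0) t)
    (hflow : ∀ t ∈ Ici (0:ℝ), fisher X (β t) *ᵥ dβ t = -gradL X y (β t))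
    {t : ℝ} (ht : 0 ≤ t) : Real.exp t • gradL X y (β t) = gradL X y (β 0) := by
  have hd : ∀ s ∈ Ici (0:ℝ),
      HasDerivWithinAt (fun s => Real.exp s • gradL X y (β s)) 0 (Ici 0) s := by
    intro s hs
    have h := hasDerivWithinAt_gradL X y hy (hβ s hs)
    rw [hflow s hs] at h
    exact ((Real.hasDerivAt_exp s).hasDerivWithinAt.smul h).congr_deriv (by simp)
  have h := constant_of_has_deriv_right_zero (a := 0) (b := t)
    (f := fun s => Real.exp s • gradL X y (β s))
    (fun s hs => ((hd s hs.1).continuousWithinAt).mono Icc_subset_Ici_self)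
    (fun s hs => (hd s hs.1).mono (Ici_subset_Ici.2 hs.1)) t (right_mem_Icc.2 ht)
  simpa using h

/-- **Theorem 2**: with `N ≥ D` and `X` of full column rank `D`, natural gradient flow on
the logistic loss satisfies `Aᵀ β'_t = β_t` where `β'` is the NGF trajectory on the
transformed data `XAᵀ`. -/
theorem ngf_parameter_invariance_overdetermined {N D : ℕ} (hND : D ≤ N)
    (X : Matrix (Fin N) (Fin D) ℝ) (hX : X.rank = D)
    (A : Matrix (Fin D) (Fin D) ℝ) (hA : IsUnit A)
    (y : Fin N → ℝ) (hy : ∀ n, y n = 1 ∨ y n = -1)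
    (β β' dβ dβ' : ℝ → Fin D → ℝ)
    (hβdiff : ∀ t ∈ Ici (0:ℝ), HasDerivWithinAt β (dβ t) (Ici 0) t)
    (hβ'diff : ∀ t ∈ Ici (0:ℝ), HasDerivWithinAt β' (dβ' t) (Ici 0) t)
    (hflow : ∀ t ∈ Ici (0:ℝ), fisher X (β t) *ᵥ dβ t = -gradL X y (β t))
    (hflow' : ∀ t ∈ Ici (0:ℝ),
      fisher (X * Aᵀ) (β' t) *ᵥ dβ' t = -gradL (X * Aᵀ) y (β' t))
    (hinit : Aᵀ *ᵥ β' 0 = β 0) :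
    ∀ t ∈ Ici (0:ℝ), Aᵀ *ᵥ β' t = β t := by
  intro t ht
  apply gradL_injective X hX y hy
  have hAinj : Function.Injective A.mulVec := mulVec_injective_iff_isUnit.2 hA
  have h := gradL_flow X y hy β dβ hβdiff hflow ht
  have h' := gradL_flow (X * Aᵀ) y hy β' dβ' hβ'diff hflow' ht
  rw [gradL_mul_transpose X y hy, gradL_mul_transpose X y hy, ← mulVec_smul] at h'
  have h'' := hAinj h'
  rw [hinit, ← h] at h''
  exact smul_right_injective _ (Real.exp_ne_zero t) h''
end

section
/- Let N < D, let X ∈ ℝ^{N×D} have full rank N, and suppose β : [0,∞) → ℝ^D is a differentiable natural gradient flow trajectory under the logistic loss, i.e. F_X(β_t) β̇_t = −∇L_X(β_t) for all t ≥ 0. Then the logits s_t = X β_t follow an asymptotically linear trajectory with direction vector y: for every n = 1,…,N, (s_t)_n / t → y_n as t → ∞. -/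
/-! Full row rank makes `Xᵀ` injective, so the flow equation decouples into one scalar equation
per sample. In terms of the margin `u = y_n (s_t)_n` it reads `φ(u)(1-φ(u)) u' = 1-φ(u)`, i.e.
`u' = 1 + exp (-u)` (`logit_velocity`). Along this equation `(exp u + 1) exp (-t)` is conserved, which
confines `u t - t` to a bounded interval; hence `u t / t → 1` (`margin_div_tendsto`), and multiplying by
`y_n = ±1` gives the claim. -/

open Matrix Set Filter

lemma phi_pos (u : ℝ) : 0 < phi u := by
  unfold phi; positivity

lemma one_sub_phi (u : ℝ) : 1 - phi u = phi (-u) := by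
  unfold phi
  rw [neg_neg, Real.exp_neg]
  have := Real.exp_pos u
  field_simp
  ring

lemma vecMul_injective_of_rank_s3 {N D : ℕ} {X : Matrix (Fin N) (Fin D) ℝ} (hX : X.rank = N) :
    Function.Injective (fun v => v ᵥ* X) := by
  apply Matrix.vecMul_injective_iff.2
  rw [linearIndependent_iff_card_eq_finrank_span, Set.finrank, ← Matrix.rank_eq_finrank_span_row, hX,
    Fintype.card_fin]

/-- The natural gradient equation, with the injective factor `Xᵀ` cancelled, determines the
velocity of every margin `y_n (Xβ)_n`. -/
lemma logit_velocity {N D : ℕ} (X : Matrix (Fin N) (Fin D) ℝ) (hX : X.rank = N)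
    (y : Fin N → ℝ) (hy : ∀ n, y n = 1 ∨ y n = -1) (b db : Fin D → ℝ)
    (hflow : fisher X b *ᵥ db = -gradL X y b) (n : Fin N) :
    y n * (X *ᵥ db) n = 1 + Real.exp (-(y n * (X *ᵥ b) n)) := by
  have key : (fun n => phi ((X *ᵥ b) n) * (1 - phi ((X *ᵥ b) n)) * (X *ᵥ db) n)
      = fun n => y n * (1 - phi (y n * (X *ᵥ b) n)) := by
    apply vecMul_injective_of_rank_s3 hX
    have hl : fisher X b *ᵥ db =
        (fun n => phi ((X *ᵥ b) n) * (1 - phi ((X *ᵥ b) n)) * (X *ᵥ db) n) ᵥ* X := by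
      rw [fisher, ← Matrix.mulVec_mulVec, ← Matrix.mulVec_mulVec, Matrix.mulVec_transpose]
      congr 1
      ext m
      rw [Matrix.mulVec_diagonal]
    have hr : -gradL X y b = (fun n => y n * (1 - phi (y n * (X *ᵥ b) n))) ᵥ* X := by
      ext d
      simp [gradL, Matrix.vecMul, Matrix.mulVec, dotProduct]
    exact hl.symm.trans (hflow.trans hr)
  have hn := congrFun key n
  set s := (X *ᵥ b) n
  set v := (X *ᵥ db) n
  have hp := phi_pos s
  have hq := phi_pos (-s)
  -- `φ(u) (1 + exp (-u)) = 1`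
  have hinv : ∀ u, phi u * (1 + Real.exp (-u)) = 1 := fun u => by
    unfold phi
    have := Real.exp_pos (-u)
    field_simp
  rw [one_sub_phi, one_sub_phi] at hn
  rcases hy n with h | h <;> rw [h] at hn ⊢
  · apply mul_left_cancel₀ (mul_pos hp hq).ne'
    have := hinv s
    simp only [one_mul] at hn ⊢
    linear_combination hn - phi (-s) * this
  · apply mul_left_cancel₀ (mul_pos hp hq).ne'
    have := hinv (-s)
    simp only [neg_mul, one_mul, neg_neg] at hn this ⊢
    linear_combination -hn - phi s * this

/-- Solutions of `u' = 1 + exp (-u)` satisfy `u t ~ t`, because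
`(exp u + 1) exp (-t)` is a first integral. -/
lemma margin_div_tendsto {u : ℝ → ℝ}
    (hu : ∀ t ∈ Ici (0:ℝ), HasDerivWithinAt u (1 + Real.exp (-u t)) (Ici 0) t) :
    Tendsto (fun t => u t / t) atTop (nhds 1) := by
  have hd : ∀ t ∈ Ici (0:ℝ),
      HasDerivWithinAt (fun t => (Real.exp (u t) + 1) * Real.exp (-t)) 0 (Ici 0) t := by
    intro t ht
    have h1 := ((hu t ht).exp.add_const 1).mul ((hasDerivWithinAt_id t (Ici 0)).neg.exp)
    refine h1.congr_deriv ?_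
    have : Real.exp (u t) * Real.exp (-u t) = 1 := by rw [← Real.exp_add]; simp
    simp only [id, Pi.neg_apply]
    linear_combination Real.exp (-t) * this
  have hc : ∀ t, 0 ≤ t → Real.exp (u t) + 1 = (Real.exp (u 0) + 1) * Real.exp t := by
    intro t ht
    have h := constant_of_has_deriv_right_zero (a := 0) (b := t)
      (fun x hx => ((hd x hx.1).continuousWithinAt.mono Icc_subset_Ici_self))
      (fun x hx => (hd x hx.1).mono (Ici_subset_Ici.2 hx.1)) t ⟨ht, le_rfl⟩
    simp only [neg_zero, Real.exp_zero, mul_one] at h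
    rw [← h, mul_assoc, ← Real.exp_add]
    simp
  have hlo : ∀ t, 0 ≤ t → u 0 + t ≤ u t := by
    intro t ht
    rw [← Real.exp_le_exp, Real.exp_add]
    have := hc t ht
    have := Real.one_le_exp ht
    linarith
  have hhi : ∀ t, 0 ≤ t → u t ≤ Real.log (Real.exp (u 0) + 1) + t := by
    intro t ht
    rw [← Real.exp_le_exp, Real.exp_add, Real.exp_log (by positivity)]
    have := hc t ht
    linarith
  have hlim : ∀ c : ℝ, Tendsto (fun t : ℝ => c / t + 1) atTop (nhds 1) := fun c => by
    simpa using (tendsto_const_nhds (x := c)).div_atTop tendsto_id |>.add_const 1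
  refine tendsto_of_tendsto_of_tendsto_of_le_of_le' (hlim (u 0))
    (hlim (Real.log (Real.exp (u 0) + 1))) ?_ ?_
  · filter_upwards [eventually_gt_atTop 0] with t ht
    rw [div_add_one ht.ne']
    gcongr
    exact hlo t ht.le
  · filter_upwards [eventually_gt_atTop 0] with t ht
    rw [div_add_one ht.ne']
    gcongr
    exact hhi t ht.le

/-- **Theorem 3**: with `N < D` and `X` of full rank `N`, the logits `s_t = X β_t` of a
natural gradient flow trajectory under the logistic loss grow asymptotically linearly
with direction vector `y`. -/
theorem ngf_logits_asymptotically_linear {N D : ℕ} (hND : N < D)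
    (X : Matrix (Fin N) (Fin D) ℝ) (hX : X.rank = N)
    (y : Fin N → ℝ) (hy : ∀ n, y n = 1 ∨ y n = -1)
    (β dβ : ℝ → Fin D → ℝ)
    (hβdiff : ∀ t ∈ Ici (0:ℝ), HasDerivWithinAt β (dβ t) (Ici 0) t)
    (hflow : ∀ t ∈ Ici (0:ℝ), fisher X (β t) *ᵥ dβ t = -gradL X y (β t)) :
    ∀ n, Tendsto (fun t => (X *ᵥ β t) n / t) atTop (nhds (y n)) := by
  classical
  intro n
  have hs : ∀ t ∈ Ici (0:ℝ), HasDerivWithinAt (fun t => y n * (X *ᵥ β t) n)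
      (1 + Real.exp (-(y n * (X *ᵥ β t) n))) (Ici 0) t := by
    intro t ht
    have h1 := (hasDerivWithinAt_pi.1 (hβdiff t ht))
    have h2 : HasDerivWithinAt (fun t => y n * (X *ᵥ β t) n) (y n * (X *ᵥ dβ t) n) (Ici 0) t := by
      simp only [Matrix.mulVec, dotProduct]
      exact (HasDerivWithinAt.fun_sum fun i _ => (h1 i).const_mul (X n i)).const_mul (y n)
    rwa [logit_velocity X hX y hy (β t) (dβ t) (hflow t ht) n] at h2
  have h := margin_div_tendsto hs
  have hyy : y n * y n = 1 := by rcases hy n with h | h <;> rw [h] <;> norm_num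
  have h' := h.const_mul (y n)
  rw [mul_one] at h'
  refine h'.congr fun t => ?_
  rw [← mul_div_assoc, ← mul_assoc, hyy, one_mul]
end

section
/- Let P ≥ N, let f : ℝ^P → ℝ^N be a differentiable logit map, let y ∈ {−1,+1}^N, and let w : [0,∞) → ℝ^P be a differentiable parameter trajectory with logits s_t = f(w_t). Suppose that for every t the Jacobian J_t = Df(w_t) ∈ ℝ^{N×P} has full rank N, and that w follows natural gradient flow on the logistic loss, i.e. J_tᵀ F(s_t) J_t ẇ_t = −J_tᵀ ∇L(s_t) for all t ≥ 0, where ∇L(s)_n = −y_n(1−φ(y_n s_n)) and F(s) = diag(φ(s_n)(1−φ(s_n)))_{n=1..N}. Then s_t grows asymptotically linearly with direction vector y: for every n, (s_t)_n / t → y_n as t → ∞. -/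
/-!
The full rank of `J` makes `Jᵀ` injective, so it can be cancelled from the flow equation, leaving
`F(s) ṡ = -∇L(s)` in logit space (`ngf_cancel`; `ṡ = J ẇ` by the chain rule). Since `F` is
diagonal the coordinates decouple, and the margin `u = y_n s_n` solves `u' = 1 + exp (-u)`.
For this equation `(exp u + 1) exp (-t)` is a conserved quantity `C > 1`, whence
`u t - t = log (C - exp (-t))` converges and `u t / t → 1` (`margin_tendsto`).
-/

open Matrix Set Filter

/-- Gradient of the logistic loss with respect to the logits:
`∇L(s)_n = -y_n (1 - φ(y_n s_n))`. -/
noncomputable def gradLs {N : ℕ} (y s : Fin N → ℝ) : Fin N → ℝ :=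
  fun n => -(y n * (1 - phi (y n * s n)))

/-- Fisher information matrix of the logits: `F(s) = diag(φ(s_n)(1-φ(s_n)))`. -/
noncomputable def fisherS {N : ℕ} (s : Fin N → ℝ) : Matrix (Fin N) (Fin N) ℝ :=
  Matrix.diagonal fun n => phi (s n) * (1 - phi (s n))

theorem margin_tendsto (u : ℝ → ℝ)
    (hu : ∀ t ∈ Ici (0:ℝ), HasDerivWithinAt u (1 + Real.exp (-u t)) (Ici 0) t) :
    Tendsto (fun t => u t / t) atTop (nhds 1) := by
  have hder : ∀ t ∈ Ici (0:ℝ),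
      HasDerivWithinAt (fun t => (Real.exp (u t) + 1) * Real.exp (-t)) 0 (Ici 0) t := by
    intro t ht
    have h1 := ((hu t ht).exp.add_const 1).mul
      ((hasDerivAt_neg t).exp.hasDerivWithinAt (s := Ici (0:ℝ)))
    refine h1.congr_deriv ?_
    have : Real.exp (u t) * Real.exp (-u t) = 1 := by rw [← Real.exp_add]; simp
    linear_combination Real.exp (-t) * this
  have hconst : ∀ t ∈ Ici (0:ℝ),
      (Real.exp (u t) + 1) * Real.exp (-t) = Real.exp (u 0) + 1 := by
    intro t ht
    have := constant_of_has_deriv_right_zero (a := 0) (b := t)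
      (fun x hx => (hder x hx.1).continuousWithinAt.mono Icc_subset_Ici_self)
      (fun x hx => (hder x hx.1).mono (Ici_subset_Ici.2 hx.1)) t ⟨ht, le_rfl⟩
    simpa using this
  have hexp : Tendsto (fun t : ℝ => Real.exp (-t)) atTop (nhds 0) :=
    Real.tendsto_exp_neg_atTop_nhds_zero
  have hlog : Tendsto (fun t : ℝ => Real.log (Real.exp (u 0) + 1 - Real.exp (-t))) atTop
      (nhds (Real.log (Real.exp (u 0) + 1 - 0))) :=
    (tendsto_const_nhds.sub hexp).log (by rw [sub_zero]; positivity)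
  have hlim := (hlog.div_atTop tendsto_id).const_add 1
  rw [add_zero] at hlim
  refine hlim.congr' ?_
  filter_upwards [eventually_gt_atTop 0] with t ht
  have h2 : Real.exp (u 0) + 1 - Real.exp (-t) = Real.exp (u t - t) := by
    rw [← hconst t ht.le, sub_eq_add_neg (u t), Real.exp_add]; ring
  rw [h2, Real.log_exp, id]
  field_simp
  ring

/-- Natural gradient flow in parameter space with a full-row-rank Jacobian descends to the natural
gradient equation for the logit velocity `J d`. -/
theorem ngf_cancel {N P : ℕ} (J : Matrix (Fin N) (Fin P) ℝ) (F : Matrix (Fin N) (Fin N) ℝ)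
    (d : Fin P → ℝ) (g : Fin N → ℝ) (hrank : J.rank = N)
    (h : (Jᵀ * F * J) *ᵥ d = -(Jᵀ *ᵥ g)) : F *ᵥ (J *ᵥ d) = -g := by
  have hinj : Function.Injective Jᵀ.mulVec := by
    rw [Matrix.mulVec_injective_iff, linearIndependent_iff_card_eq_finrank_span, Set.finrank,
      ← Matrix.rank_eq_finrank_span_cols, Matrix.rank_transpose, hrank, Fintype.card_fin]
  apply hinj
  simpa [← Matrix.mulVec_mulVec, Matrix.mulVec_neg, Matrix.mul_assoc] using h

/-- A single coordinate of the logit equation, solved for the velocity of the margin `y s`. -/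
theorem margin_velocity (y s v : ℝ) (hy : y = 1 ∨ y = -1)
    (h : phi s * (1 - phi s) * v = y * (1 - phi (y * s))) :
    y * v = 1 + Real.exp (-(y * s)) := by
  have hpos := Real.exp_pos s
  unfold phi at h
  rcases hy with rfl | rfl
  · simp only [one_mul, Real.exp_neg] at h ⊢
    field_simp at h ⊢
    ring_nf at h ⊢
    linarith
  · simp only [neg_one_mul, Real.exp_neg, neg_neg] at h ⊢
    field_simp at h ⊢
    have hne : Real.exp s * (1 + Real.exp s) ≠ 0 := by positivity
    apply mul_left_cancel₀ hne
    ring_nf at h ⊢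
    linarith

/-- **Theorem 4**: for an overparametrized (`P ≥ N`) differentiable classifier with
full-rank Jacobian following natural gradient flow on the logistic loss, the logits
`s_t = f(w_t)` grow asymptotically linearly with direction vector `y`. -/
theorem ngf_logits_asymptotically_linear_nonlinear {N P : ℕ} (hNP : N ≤ P)
    (f : (Fin P → ℝ) → (Fin N → ℝ))
    (y : Fin N → ℝ) (hy : ∀ n, y n = 1 ∨ y n = -1)
    (w dw : ℝ → Fin P → ℝ) (J : ℝ → Matrix (Fin N) (Fin P) ℝ)
    (hwdiff : ∀ t ∈ Ici (0:ℝ), HasDerivWithinAt w (dw t) (Ici 0) t)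
    (hJ : ∀ t ∈ Ici (0:ℝ),
      HasFDerivAt f ((J t).mulVecLin.toContinuousLinearMap) (w t))
    (hrank : ∀ t ∈ Ici (0:ℝ), (J t).rank = N)
    (hflow : ∀ t ∈ Ici (0:ℝ),
      ((J t)ᵀ * fisherS (f (w t)) * J t) *ᵥ dw t = -((J t)ᵀ *ᵥ gradLs y (f (w t)))) :
    ∀ n, Tendsto (fun t => f (w t) n / t) atTop (nhds (y n)) := by
  intro n
  have hyy : y n * y n = 1 := by rcases hy n with h | h <;> rw [h] <;> norm_num
  have hu : ∀ t ∈ Ici (0:ℝ), HasDerivWithinAt (fun t => y n * f (w t) n)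
      (1 + Real.exp (-(y n * f (w t) n))) (Ici 0) t := by
    intro t ht
    have hs : HasDerivWithinAt (fun t => f (w t)) (J t *ᵥ dw t) (Ici 0) t :=
      (hJ t ht).comp_hasDerivWithinAt t (hwdiff t ht)
    refine ((hasDerivWithinAt_pi.1 hs n).const_mul (y n)).congr_deriv ?_
    have h := congrFun (ngf_cancel _ _ _ _ (hrank t ht) (hflow t ht)) n
    refine margin_velocity _ _ _ (hy n) ?_
    simpa [fisherS, gradLs, Matrix.mulVec_diagonal] using h
  have hlim := (margin_tendsto _ hu).const_mul (y n)
  rw [mul_one] at hlim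
  refine hlim.congr fun t => ?_
  rw [← mul_div_assoc, ← mul_assoc, hyy, one_mul]
end

section
/- Let a ∈ ℝ and let s : (a, ∞) → ℝ be differentiable with s'(t) = 1 + exp(−s(t)) for all t > a. Then the function t ↦ log(1 + exp(s(t))) − t is constant on (a, ∞); that is, there exists c ∈ ℝ such that log(1 + exp(s(t))) = t + c for all t > a. -/
/-- The scalar ODE `s' = 1 + exp(-s)` arising from natural gradient flow on the logistic
loss for a single data point (with label `+1`) integrates to
`log(1 + exp(s(t))) = t + c`. -/
theorem ngf_scalar_ode_solution (a : ℝ) (s : ℝ → ℝ)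
    (hs : ∀ t ∈ Set.Ioi a, HasDerivAt s (1 + Real.exp (-s t)) t) :
    ∃ c : ℝ, ∀ t ∈ Set.Ioi a, Real.log (1 + Real.exp (s t)) = t + c := by
  -- By the chain rule the derivative is `exp s * (1 + exp (-s)) / (1 + exp s) - 1 = 0`.
  have hderiv : ∀ t ∈ Set.Ioi a,
      HasDerivAt (fun u => Real.log (1 + Real.exp (s u)) - u) 0 t := by
    intro t ht
    have hpos : 1 + Real.exp (s t) ≠ 0 := by positivity
    have h := (((hs t ht).exp.const_add 1).log hpos).sub (hasDerivAt_id t)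
    refine h.congr_deriv ?_
    rw [Real.exp_neg]
    field_simp
    ring
  obtain ⟨c, hc⟩ := isOpen_Ioi.exists_is_const_of_deriv_eq_zero isPreconnected_Ioi
    (fun t ht => (hderiv t ht).differentiableAt.differentiableWithinAt)
    (fun t ht => (hderiv t ht).deriv)
  exact ⟨c, fun t ht => by linarith [hc t ht]⟩
end

section
/- Let a ∈ ℝ and let s : (a, ∞) → ℝ be differentiable with s'(t) = 1 + exp(−s(t)) for all t > a. Then s(t)/t → 1 as t → ∞. -/
/-!
The quantity `log (1 + exp (s t)) - t` is a first integral of `s' = 1 + exp (-s)`, so it equals a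
constant `c` on `(a, ∞)`, i.e. `exp (s t) = exp (t + c) - 1`. Once `t + c ≥ log 2` this gives
`t + c - log 2 ≤ s t ≤ t + c`, and dividing by `t` squeezes `s t / t` to `1`.
-/

open Filter

theorem exists_exp_eq_of_ode (a : ℝ) (s : ℝ → ℝ)
    (hs : ∀ t ∈ Set.Ioi a, HasDerivAt s (1 + Real.exp (-s t)) t) :
    ∃ c : ℝ, ∀ t ∈ Set.Ioi a, 1 + Real.exp (s t) = Real.exp (t + c) := by
  have hd : ∀ t ∈ Set.Ioi a, HasDerivAt (fun u => Real.log (1 + Real.exp (s u)) - u) 0 t := by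
    intro t ht
    have hpos : 1 + Real.exp (s t) ≠ 0 := by positivity
    refine ((((hs t ht).exp.const_add 1).log hpos).sub (hasDerivAt_id t)).congr_deriv ?_
    rw [Real.exp_neg]
    field_simp
    ring
  refine ⟨Real.log (1 + Real.exp (s (a + 1))) - (a + 1), fun t ht => ?_⟩
  have hc := isOpen_Ioi.is_const_of_deriv_eq_zero isPreconnected_Ioi
    (fun u hu => (hd u hu).differentiableAt.differentiableWithinAt)
    (fun u hu => (hd u hu).deriv) ht (show a + 1 ∈ Set.Ioi a by simp)
  rw [← hc, add_sub_cancel, Real.exp_log (by positivity)]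

/-- The solution of the scalar ODE `s' = 1 + exp(-s)` arising from natural gradient flow
on the logistic loss for a single data point with label `+1` grows asymptotically like
`t`: `s(t)/t → 1` as `t → ∞`. -/
theorem ngf_scalar_ode_asymptotics (a : ℝ) (s : ℝ → ℝ)
    (hs : ∀ t ∈ Set.Ioi a, HasDerivAt s (1 + Real.exp (-s t)) t) :
    Tendsto (fun t => s t / t) atTop (nhds 1) := by
  obtain ⟨c, hc⟩ := exists_exp_eq_of_ode a s hs
  have hlim : ∀ k : ℝ, Tendsto (fun t : ℝ => 1 + k / t) atTop (nhds 1) := fun k => by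
    simpa using (tendsto_const_nhds (x := (1 : ℝ))).add
      (tendsto_const_nhds (x := k).div_atTop tendsto_id)
  refine tendsto_of_tendsto_of_tendsto_of_le_of_le' (hlim (c - Real.log 2)) (hlim c) ?_ ?_
  · filter_upwards [eventually_gt_atTop a, eventually_gt_atTop 0,
      eventually_ge_atTop (Real.log 2 - c)] with t hta ht0 ht
    have h2 : 2 ≤ Real.exp (t + c) := by
      rw [← Real.log_le_iff_le_exp (by norm_num)]
      linarith
    have hle : t + c - Real.log 2 ≤ s t := by
      rw [← Real.exp_le_exp, Real.exp_sub, Real.exp_log (by norm_num)]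
      linarith [hc t hta]
    rw [le_div_iff₀ ht0, add_mul, div_mul_cancel₀ _ ht0.ne']
    linarith
  · filter_upwards [eventually_gt_atTop a, eventually_gt_atTop 0] with t hta ht0
    have hle : s t ≤ t + c := by
      rw [← Real.exp_le_exp]
      linarith [hc t hta]
    rw [div_le_iff₀ ht0, add_mul, div_mul_cancel₀ _ ht0.ne']
    linarith
end
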